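/- For all b, b' with 0 < b' < b ≤ π/2 and every α ∈ ℝ, the bound-state energies satisfy ε(α,b) < ε(α,b'); i.e. the eigenvalue is strictly monotonous across the halflayer: ε(α,b) < ε(α,b') whenever |b − π/2| < |b' − π/2|. -/

import Mathlib

open Real Filter Topology Asymptotics

/-- The digamma function `ψ = Γ'/Γ`. -/
noncomputable def digamma (x : ℝ) : ℝ := deriv Real.Gamma x / Real.Gamma x

/-- The regularized Green's function `ξ(b,z)` of a point interaction at height
`b ∈ (0,π)` in the Dirichlet layer `ℝ²×(0,π)`, for energies `z < 1`:
`ξ(b,z) = −(1/π²) Σ_{n≥1} ln√(1 − z/n²)·sin²(n b)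
          + (1/(4π²))·[γ + ψ(b/π) + (π/2)·cot b]`. -/
noncomputable def xiLayer (b z : ℝ) : ℝ :=
  -(1 / π ^ 2) *
      ∑' n : ℕ, Real.log (Real.sqrt (1 - z / ((n : ℝ) + 1) ^ 2)) * Real.sin (((n : ℝ) + 1) * b) ^ 2
    + (1 / (4 * π ^ 2)) *
      (Real.eulerMascheroniConstant + digamma (b / π) + (π / 2) * Real.cot b)


section FourierPart
open Complex in
lemma coef_integral (w : ℂ) (n : ℤ) (h : w + n * I ≠ 0) :
    ∫ x in (0:ℝ)..π, Complex.exp (-(2 * I * n * x)) * Complex.exp (w * (π - 2 * x))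
      = Complex.sinh (w * π) / (w + n * I) := by
  have hc : (-(2 * (w + n * I)) : ℂ) ≠ 0 := by
    simpa using h
  have h1 : ∀ x : ℝ, Complex.exp (-(2 * I * n * x)) * Complex.exp (w * (π - 2 * x))
      = Complex.exp (w * π) * Complex.exp (-(2 * (w + n * I)) * x) := by
    intro x
    rw [← Complex.exp_add, ← Complex.exp_add]
    congr 1
    ring
  simp_rw [h1]
  rw [intervalIntegral.integral_const_mul, integral_exp_mul_complex hc]
  have h2 : Complex.exp (-(2 * (w + n * I)) * π) = Complex.exp (-(w * π)) * Complex.exp (-(w * π)) := by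
    have h3 : (-(2 * (w + n * I)) * π : ℂ) = -(w * π) + -(w * π) + (-n : ℤ) * (2 * π * I) := by
      push_cast; ring
    rw [h3, Complex.exp_add, Complex.exp_int_mul_two_pi_mul_I, mul_one, Complex.exp_add]
  have h4 : Complex.exp (w * π) * Complex.exp (-(w * π)) = 1 := by
    rw [← Complex.exp_add]; simp
  rw [h2]
  simp only [Complex.ofReal_zero, mul_zero, Complex.exp_zero]
  rw [Complex.sinh, ← mul_div_assoc, div_div, div_eq_div_iff hc (by simpa using h)]
  linear_combination (2 * (w + n * I) * Complex.exp (-(w * π))) * h4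

open Complex in
lemma fourier_cosh (w : ℂ) (hw : ∀ n : ℤ, w + n * I ≠ 0) (hs : Complex.sinh (w * π) ≠ 0)
    (x : ℝ) (hx : x ∈ Set.Ico 0 π) :
    HasSum (fun n : ℤ => Complex.exp (2 * I * n * x) / (w ^ 2 + n ^ 2))
      (π * Complex.cosh (w * (π - 2 * x)) / (w * Complex.sinh (w * π))) := by
  have : Fact (0 < π) := ⟨Real.pi_pos⟩
  have hw0 : w ≠ 0 := by simpa using hw 0
  have hprod : ∀ n : ℤ, w ^ 2 + (n : ℂ) ^ 2 ≠ 0 := by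
    intro n
    have h1 := mul_ne_zero (hw n) (hw (-n))
    have h2 : (w + n * I) * (w + ((-n : ℤ) : ℂ) * I) = w ^ 2 + (n : ℂ) ^ 2 := by
      push_cast
      linear_combination (-(n : ℂ) ^ 2) * Complex.I_sq
    rwa [h2] at h1
  have hpi : (π : ℂ) ≠ 0 := by exact_mod_cast Real.pi_ne_zero
  let g : ℝ → ℂ := fun x => Complex.exp (w * (π - 2 * x)) + Complex.exp (-w * (π - 2 * x))
  have hgc : Continuous g := by fun_prop
  have hg0 : g 0 = g π := by
    simp only [g]
    rw [add_comm]
    congr 2 <;> push_cast <;> ring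
  let f : C(AddCircle π, ℂ) := ⟨AddCircle.liftIco π 0 g,
    AddCircle.liftIco_zero_continuous hg0 hgc.continuousOn⟩
  have hcoef : ∀ n : ℤ, fourierCoeff f n
      = 2 * w * Complex.sinh (w * π) / π * (1 / (w ^ 2 + n ^ 2)) := by
    intro n
    have e1 : fourierCoeff f n = fourierCoeff (AddCircle.liftIco π 0 g) n := rfl
    rw [e1, fourierCoeff_liftIco_eq, fourierCoeffOn_eq_integral]
    have e2 : ∀ y : ℝ, (fourier (-n) (y : AddCircle (0 + π - 0)) • g y : ℂ)
        = Complex.exp (-(2 * I * n * y)) * Complex.exp (w * (π - 2 * y))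
          + Complex.exp (-(2 * I * n * y)) * Complex.exp (-w * (π - 2 * y)) := by
      intro y
      rw [fourier_coe_apply]
      simp only [g, smul_eq_mul, mul_add]
      have : (2 * π * I * ((-n : ℤ) : ℂ) * y / ((0 + π - 0 : ℝ) : ℂ)) = -(2 * I * n * y) := by
        push_cast
        field_simp
        ring
      rw [this]
    simp_rw [e2]
    rw [intervalIntegral.integral_add, zero_add]
    rotate_left
    · exact Continuous.intervalIntegrable (by fun_prop) _ _
    · exact Continuous.intervalIntegrable (by fun_prop) _ _
    rw [coef_integral w n (hw n), coef_integral (-w) n (by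
      have := hw (-n)
      intro h
      apply this
      push_cast
      linear_combination -h)]
    have e3 : Complex.sinh (-w * π) = - Complex.sinh (w * π) := by
      rw [neg_mul, Complex.sinh_neg]
    rw [e3]
    have hA := hw n
    have hB : -w + n * I ≠ 0 := by
      have := hw (-n)
      intro h
      apply this
      push_cast
      linear_combination -h
    have e4 : Complex.sinh (w * π) / (w + n * I) + -Complex.sinh (w * π) / (-w + n * I)
        = Complex.sinh (w * π) * (2 * w) / (w ^ 2 + n ^ 2) := by
      rw [div_add_div _ _ hA hB, div_eq_div_iff (mul_ne_zero hA hB) (hprod n)]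
      linear_combination (-2 * w * Complex.sinh (w * π) * (n:ℂ)^2) * Complex.I_sq
    rw [e4]
    simp only [sub_zero, Complex.real_smul]
    push_cast
    field_simp
  have hsum0 : Summable (fun n : ℤ => (1 / (w ^ 2 + (n : ℂ) ^ 2))) := by
    have hZ : Summable (fun n : ℤ => 1 / (n : ℝ) ^ 2) := Real.summable_one_div_int_pow.mpr one_lt_two
    refine summable_of_isBigO hZ (g := fun n : ℤ => 1 / (n : ℝ) ^ 2) ?_
    refine Asymptotics.IsBigO.of_bound 2 ?_
    have ht : ∀ᶠ n : ℤ in Filter.cofinite, 2 * ‖w‖ ^ 2 ≤ (n : ℝ) ^ 2 ∧ n ≠ 0 := by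
      have : Set.Finite {n : ℤ | ¬ (2 * ‖w‖ ^ 2 ≤ (n : ℝ) ^ 2 ∧ n ≠ 0)} := by
        obtain ⟨N, hN⟩ := exists_nat_gt (2 * ‖w‖ ^ 2 + 1)
        refine (Set.finite_Icc (-(N:ℤ)) N).subset ?_
        intro n hn
        by_contra hcon
        apply hn
        have h5 : (N : ℤ) < |n| := by
          rw [Set.mem_Icc, ← abs_le] at hcon
          exact not_le.mp hcon
        have h6 : (N : ℝ) < |(n : ℝ)| := by exact_mod_cast h5
        have h7 : 0 ≤ ‖w‖ ^ 2 := by positivity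
        constructor
        · rw [← sq_abs (n : ℝ)]
          nlinarith
        · rintro rfl
          simp at h6
          linarith
      exact this
    filter_upwards [ht] with n hn
    have hn0 : (0:ℝ) < (n : ℝ) ^ 2 := by
      have : (n : ℝ) ≠ 0 := by exact_mod_cast hn.2
      positivity
    have h8 : (n : ℝ) ^ 2 / 2 ≤ ‖w ^ 2 + (n : ℂ) ^ 2‖ := by
      have h9 : ‖(n : ℂ) ^ 2‖ ≤ ‖w ^ 2 + (n : ℂ) ^ 2‖ + ‖w ^ 2‖ := by
        have := norm_sub_le (w ^ 2 + (n : ℂ) ^ 2) (w ^ 2)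
        simpa using this
      have h10 : ‖(n : ℂ) ^ 2‖ = (n : ℝ) ^ 2 := by
        rw [norm_pow, Complex.norm_intCast, sq_abs]
      rw [h10, norm_pow] at h9
      linarith [hn.1]
    rw [norm_div, norm_one, Real.norm_of_nonneg (by positivity)]
    calc 1 / ‖w ^ 2 + (n : ℂ) ^ 2‖ ≤ 1 / ((n : ℝ) ^ 2 / 2) :=
          one_div_le_one_div_of_le (by positivity) h8
      _ = 2 * (1 / (n : ℝ) ^ 2) := by field_simp
  have hS : Summable (fourierCoeff f) := by
    have : fourierCoeff f = fun n : ℤ => 2 * w * Complex.sinh (w * π) / π * (1 / (w ^ 2 + (n : ℂ) ^ 2)) :=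
      funext hcoef
    rw [this]
    exact hsum0.mul_left _
  have hfin := has_pointwise_sum_fourier_series_of_summable hS (x : AddCircle π)
  have hfx : f (x : AddCircle π) = g x := AddCircle.liftIco_zero_coe_apply (f := g) hx
  rw [hfx] at hfin
  have hfin2 := hfin.mul_left (π / (2 * w * Complex.sinh (w * π)))
  convert! hfin2 using 1
  · funext n
    rw [hcoef, fourier_coe_apply]
    have : (2 * π * I * (n : ℂ) * x / (π : ℂ)) = 2 * I * n * x := by
      field_simp
    rw [this, smul_eq_mul]
    have := hprod n
    field_simp
  · simp only [g]
    rw [Complex.cosh, neg_mul]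
    field_simp

/-- Folded form: a difference of the cosine series. -/
lemma cos_diff_hasSum (w : ℂ) (hw : ∀ n : ℤ, w + n * Complex.I ≠ 0)
    (hs : Complex.sinh (w * π) ≠ 0)
    (x y : ℝ) (hx : x ∈ Set.Ico 0 π) (hy : y ∈ Set.Ico 0 π) :
    HasSum (fun n : ℕ => ((Real.cos (2 * ((n:ℝ) + 1) * x) - Real.cos (2 * ((n:ℝ) + 1) * y) : ℝ) : ℂ)
        / (w ^ 2 + ((n : ℂ) + 1) ^ 2))
      (π * (Complex.cosh (w * (π - 2 * x)) - Complex.cosh (w * (π - 2 * y)))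
        / (2 * w * Complex.sinh (w * π))) := by
  have h := (fourier_cosh w hw hs x hx).sub (fourier_cosh w hw hs y hy)
  have h2 := h.nat_add_neg
  rw [← hasSum_nat_add_iff' 1] at h2
  have h3 := h2.mul_left (1/2)
  have hw0 : w ≠ 0 := by simpa using hw 0
  convert! h3 using 1
  · funext n
    push_cast
    rw [Complex.cos, Complex.cos]
    have e : ∀ t : ℂ, Complex.exp (2 * (n + 1) * t * Complex.I) = Complex.exp (2 * Complex.I * (n + 1) * t) := by
      intro t; congr 1; ring
    have e' : ∀ t : ℂ, Complex.exp (-(2 * (n + 1) * t) * Complex.I) = Complex.exp (2 * Complex.I * (-1 + -n) * t) := by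
      intro t; congr 1; ring
    simp only [neg_add_rev]
    rw [e, e, e', e']
    ring
  · simp
    field_simp
end FourierPart

section DigammaPart

lemma logGamma_hasDerivAt {x : ℝ} (hx : 0 < x) :
    HasDerivAt (Real.log ∘ Real.Gamma) (digamma x) x := by
  have h1 : DifferentiableAt ℝ Real.Gamma x :=
    Real.differentiableAt_Gamma (fun m => by
      have : (0:ℝ) ≤ m := m.cast_nonneg
      linarith)
  exact h1.hasDerivAt.log (Real.Gamma_pos_of_pos hx).ne'

lemma digamma_add_one {x : ℝ} (hx : 0 < x) : digamma (x + 1) = digamma x + 1 / x := by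
  have h1 : HasDerivAt (fun t => (Real.log ∘ Real.Gamma) (t + 1)) (digamma (x + 1)) x :=
    (logGamma_hasDerivAt (x := x + 1) (by linarith)).comp_add_const x 1
  have h2 : HasDerivAt (fun t => (Real.log ∘ Real.Gamma) t + Real.log t) (digamma x + x⁻¹) x :=
    (logGamma_hasDerivAt hx).add (Real.hasDerivAt_log hx.ne')
  have h3 : (fun t => (Real.log ∘ Real.Gamma) (t + 1)) =ᶠ[𝓝 x]
      (fun t => (Real.log ∘ Real.Gamma) t + Real.log t) := by
    filter_upwards [eventually_gt_nhds hx] with t ht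
    simp only [Function.comp_apply]
    rw [Real.Gamma_add_one ht.ne', Real.log_mul ht.ne' (Real.Gamma_pos_of_pos ht).ne', add_comm]
  rw [one_div]
  exact h1.unique (h2.congr_of_eventuallyEq h3)

lemma digamma_mono {x y : ℝ} (hx : 0 < x) (hxy : x ≤ y) : digamma x ≤ digamma y := by
  have hy : 0 < y := by linarith
  have h := Real.convexOn_log_Gamma.monotoneOn_deriv
    (fun x hx => (logGamma_hasDerivAt hx).differentiableAt)
  have h2 := h (Set.mem_Ioi.mpr hx) (Set.mem_Ioi.mpr hy) hxy
  rwa [(logGamma_hasDerivAt hx).deriv, (logGamma_hasDerivAt hy).deriv] at h2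

lemma digamma_reflect {x : ℝ} (hx : 0 < x) (hx1 : x < 1) :
    digamma (1 - x) - digamma x = π * Real.cot (π * x) := by
  have h1 : HasDerivAt (fun t => (Real.log ∘ Real.Gamma) (1 - t)) (-digamma (1 - x)) x :=
    (logGamma_hasDerivAt (x := 1 - x) (by linarith)).comp_const_sub 1 x
  have h2 := (logGamma_hasDerivAt hx).add h1
  have hsin : ∀ t : ℝ, 0 < t → t < 1 → 0 < Real.sin (π * t) := by
    intro t h0 h1
    apply Real.sin_pos_of_pos_of_lt_pi
    · positivity
    · nlinarith [Real.pi_pos]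
  have h3 : HasDerivAt (fun t => Real.log π - Real.log (Real.sin (π * t)))
      (-(Real.cos (π * x) * π / Real.sin (π * x))) x := by
    have h4 : HasDerivAt (fun t => Real.sin (π * t)) (Real.cos (π * x) * π) x := by
      have := (Real.hasDerivAt_sin (π * x)).comp x ((hasDerivAt_id x).const_mul π)
      simpa using! this
    exact (h4.log (hsin x hx hx1).ne').const_sub _
  have h5 : (Real.log ∘ Real.Gamma + fun t => (Real.log ∘ Real.Gamma) (1 - t)) =ᶠ[𝓝 x]
      (fun t => Real.log π - Real.log (Real.sin (π * t))) := by
    filter_upwards [eventually_gt_nhds hx, eventually_lt_nhds hx1] with t ht ht1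
    simp only [Function.comp_apply, Pi.add_apply]
    rw [← Real.log_mul (Real.Gamma_pos_of_pos ht).ne' (Real.Gamma_pos_of_pos (by linarith)).ne',
      Real.Gamma_mul_Gamma_one_sub, Real.log_div Real.pi_ne_zero (hsin t ht ht1).ne']
  have h6 := h2.unique (h3.congr_of_eventuallyEq h5)
  rw [Real.cot_eq_cos_div_sin]
  linear_combination -h6

/-- Image function. -/
noncomputable def imF (L t : ℝ) : ℝ := Real.exp (-(L * t)) / t

/-- Image-sum coefficients (the difference between heights `y` and `x`). -/
noncomputable def imC (x y : ℝ) (m : ℕ) (L : ℝ) : ℝ :=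
  (imF L (y + m) + imF L (1 - y + m) - imF L (x + m) - imF L (1 - x + m)) / 2

lemma exp_four {A B C D L : ℝ} (hAB : A < B) (hBC : B ≤ C) (hsum : A + D = B + C)
    (hL : 0 ≤ L) :
    Real.exp (-(L * C)) - Real.exp (-(L * D)) ≤ Real.exp (-(L * A)) - Real.exp (-(L * B)) := by
  have h1 : Real.exp (-(L * D)) = Real.exp (-(L * C)) * Real.exp (-(L * (B - A))) := by
    rw [← Real.exp_add]; congr 1; linear_combination -L * hsum
  have h2 : Real.exp (-(L * B)) = Real.exp (-(L * A)) * Real.exp (-(L * (B - A))) := by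
    rw [← Real.exp_add]; congr 1; ring
  have h3 : Real.exp (-(L * (B - A))) ≤ 1 := by
    rw [Real.exp_le_one_iff]
    nlinarith
  have h4 : Real.exp (-(L * C)) ≤ Real.exp (-(L * A)) := by
    apply Real.exp_le_exp.mpr
    nlinarith
  rw [h1, h2]
  nlinarith

lemma imC_pos {x y : ℝ} (hy : 0 < y) (hyx : y < x) (hx : x ≤ 1 / 2) (m : ℕ) {L : ℝ}
    (hL : 0 ≤ L) : 0 < imC x y m L := by
  have hm : (0:ℝ) ≤ m := m.cast_nonneg
  set A := y + (m:ℝ) with hA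
  set B := x + (m:ℝ) with hB
  set C := 1 - x + (m:ℝ) with hC
  set D := 1 - y + (m:ℝ) with hD
  have hA0 : 0 < A := by linarith
  have hAB : A < B := by linarith
  have hBC : B ≤ C := by linarith
  have hCD : C < D := by linarith
  have hsum : A + D = B + C := by linarith
  have he := exp_four hAB hBC hsum hL
  have heAC : Real.exp (-(L * C)) ≤ Real.exp (-(L * A)) := by
    apply Real.exp_le_exp.mpr
    nlinarith
  have heCD : Real.exp (-(L * D)) ≤ Real.exp (-(L * C)) := by
    apply Real.exp_le_exp.mpr
    nlinarith
  have heC := Real.exp_pos (-(L * C))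
  have hB0 : 0 < B := by linarith
  have hC0 : 0 < C := by linarith
  have hD0 : 0 < D := by linarith
  have hr1 : 1 / C - 1 / D < 1 / A - 1 / B := by
    rw [div_sub_div _ _ hC0.ne' hD0.ne', div_sub_div _ _ hA0.ne' hB0.ne']
    have e1 : 1 * B - A * 1 = B - A := by ring
    have e2 : 1 * D - C * 1 = B - A := by linarith
    rw [e1, e2]
    apply div_lt_div_of_pos_left (by linarith) (by positivity)
    nlinarith
  have hr0 : 0 < 1 / C - 1 / D := sub_pos.mpr (one_div_lt_one_div_of_lt hC0 hCD)
  have hr2 : 1 / D ≤ 1 / B := one_div_le_one_div_of_le hB0 (by linarith)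
  have hD1 : 0 < 1 / D := by positivity
  unfold imC imF
  simp only [← hA, ← hB, ← hC, ← hD]
  simp only [div_eq_mul_one_div (Real.exp _)]
  generalize 1 / A = a at *
  generalize 1 / B = b at *
  generalize 1 / C = c at *
  generalize 1 / D = d at *
  generalize Real.exp (-(L * A)) = eA at *
  generalize Real.exp (-(L * B)) = eB at *
  generalize Real.exp (-(L * C)) = eC at *
  generalize Real.exp (-(L * D)) = eD at *
  have k1 : eC * (c - d) < eA * (a - b) := by nlinarith
  have k2 : (eC - eD) * d ≤ (eA - eB) * b := by nlinarith
  nlinarith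

/-- The symmetrized digamma function. -/
noncomputable def psiS (x : ℝ) : ℝ := (digamma x + digamma (1 - x)) / 2

lemma digamma_shift {x : ℝ} (hx : 0 < x) (M : ℕ) :
    digamma (x + M) = digamma x + ∑ m ∈ Finset.range M, 1 / (x + m) := by
  induction M with
  | zero => simp
  | succ k ih =>
    rw [Finset.sum_range_succ, ← add_assoc, ← ih]
    push_cast
    rw [← add_assoc, digamma_add_one (by positivity)]

lemma digamma_diff_tendsto {x y : ℝ} (hx : 0 < x) (hx1 : x < 1) (hy : 0 < y) (hy1 : y < 1) :
    Tendsto (fun M : ℕ => digamma (x + M) - digamma (y + M)) atTop (𝓝 0) := by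
  rw [← tendsto_add_atTop_iff_nat 1]
  refine squeeze_zero_norm (a := fun n : ℕ => 1 / ((n:ℝ) + 1)) ?_ tendsto_one_div_add_atTop_nhds_zero_nat
  intro n
  push_cast
  have hn : (0:ℝ) ≤ n := n.cast_nonneg
  have h1 := digamma_add_one (x := (n:ℝ) + 1) (by positivity)
  have a1 := digamma_mono (x := (n:ℝ) + 1) (y := x + (n + 1)) (by positivity) (by linarith)
  have a2 := digamma_mono (x := x + ((n:ℝ) + 1)) (y := (n:ℝ) + 1 + 1) (by positivity) (by linarith)
  have a3 := digamma_mono (x := (n:ℝ) + 1) (y := y + (n + 1)) (by positivity) (by linarith)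
  have a4 := digamma_mono (x := y + ((n:ℝ) + 1)) (y := (n:ℝ) + 1 + 1) (by positivity) (by linarith)
  rw [Real.norm_eq_abs, abs_le]
  constructor <;> linarith

lemma imC_zero_hasSum {x y : ℝ} (hy : 0 < y) (hyx : y < x) (hx : x ≤ 1 / 2) :
    HasSum (fun m : ℕ => imC x y m 0) (psiS x - psiS y) := by
  rw [hasSum_iff_tendsto_nat_of_nonneg (fun m => (imC_pos hy hyx hx m le_rfl).le)]
  have h1 := digamma_diff_tendsto (x := x) (y := y) (by linarith) (by linarith) hy (by linarith)
  have h2 := digamma_diff_tendsto (x := 1 - x) (y := 1 - y) (by linarith) (by linarith)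
    (by linarith) (by linarith)
  have h3 := ((h1.add h2).div_const 2).const_sub (psiS x - psiS y)
  simp only [add_zero, zero_div, sub_zero] at h3
  refine h3.congr ?_
  intro M
  rw [digamma_shift (by linarith), digamma_shift hy, digamma_shift (by linarith),
    digamma_shift (by linarith)]
  simp only [imC, imF, zero_mul, neg_zero, Real.exp_zero]
  rw [← Finset.sum_div, Finset.sum_sub_distrib, Finset.sum_sub_distrib, Finset.sum_add_distrib]
  unfold psiS
  ring

end DigammaPart

section CalculusPart

lemma summable_inv_sq : Summable (fun n : ℕ => 1 / ((n:ℝ) + 1) ^ 2) := by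
  have h := (summable_nat_add_iff 1).mpr (Real.summable_one_div_nat_pow.mpr one_lt_two)
  simpa using h

lemma summable_log_mul (z : ℝ) (a : ℕ → ℝ) (C : ℝ) (ha : ∀ n, |a n| ≤ C) :
    Summable (fun n : ℕ => Real.log (1 - z / ((n:ℝ) + 1) ^ 2) * a n) := by
  have h1 : Summable (fun n : ℕ => Real.log (1 + (-z) * (1 / ((n:ℝ) + 1) ^ 2))) :=
    Real.summable_log_one_add_of_summable (summable_inv_sq.mul_left (-z))
  have h2 := (h1.abs).mul_right C
  refine Summable.of_norm_bounded h2 ?_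
  intro n
  have e : (1 - z / ((n:ℝ) + 1) ^ 2) = 1 + (-z) * (1 / ((n:ℝ) + 1) ^ 2) := by ring
  rw [norm_mul, e]
  exact mul_le_mul_of_nonneg_left (ha n) (norm_nonneg _)

lemma one_le_sq (n : ℕ) : (1:ℝ) ≤ ((n:ℝ) + 1) ^ 2 := by
  have hn : (0:ℝ) ≤ n := n.cast_nonneg
  nlinarith

lemma arg_pos {z : ℝ} (hz : z < 1) (n : ℕ) : 0 < 1 - z / ((n:ℝ) + 1) ^ 2 := by
  have h := one_le_sq n
  rw [sub_pos, div_lt_one (by linarith)]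
  linarith

/-- The logarithmic series. -/
noncomputable def logSer (a : ℕ → ℝ) (z : ℝ) : ℝ :=
  ∑' n : ℕ, Real.log (1 - z / ((n:ℝ) + 1) ^ 2) * a n

lemma logSer_hasDerivAt (a : ℕ → ℝ) (C : ℝ) (ha : ∀ n, |a n| ≤ C) {z : ℝ} (hz : z < 1) :
    HasDerivAt (logSer a) (-∑' n : ℕ, a n / (((n:ℝ) + 1) ^ 2 - z)) z := by
  obtain ⟨r, hr⟩ : ∃ r, max z 0 < r ∧ r < 1 := exists_between (by simp [hz])
  have hr0 : 0 < r := lt_of_le_of_lt (le_max_right _ _) hr.1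
  have hrz : z < r := lt_of_le_of_lt (le_max_left _ _) hr.1
  have hC : 0 ≤ C := (abs_nonneg _).trans (ha 0)
  have hder := hasDerivAt_tsum_of_isPreconnected
    (g := fun (n : ℕ) (z : ℝ) => Real.log (1 - z / ((n:ℝ) + 1) ^ 2) * a n)
    (g' := fun (n : ℕ) (z : ℝ) => -(a n / (((n:ℝ) + 1) ^ 2 - z)))
    (u := fun n : ℕ => (C / (1 - r)) * (1 / ((n:ℝ) + 1) ^ 2)) (t := Set.Iio r) (y₀ := z) (y := z)
    (summable_inv_sq.mul_left _) isOpen_Iio isPreconnected_Iio ?_ ?_ hrz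
    (summable_log_mul z a C ha) hrz
  · rw [tsum_neg] at hder
    exact hder
  · intro n y hy
    have hy1 : y < 1 := lt_trans hy hr.2
    have hp := arg_pos hy1 n
    have h1 := one_le_sq n
    have hd : HasDerivAt (fun z : ℝ => 1 - z / ((n:ℝ) + 1) ^ 2) (-(1 / ((n:ℝ) + 1) ^ 2)) y :=
      ((hasDerivAt_id y).div_const _).const_sub 1
    have hd2 := (hd.log hp.ne').mul_const (a n)
    convert! hd2 using 1
    have h2 : ((n:ℝ) + 1) ^ 2 - y ≠ 0 := by linarith
    have h3 : ((n:ℝ) + 1) ^ 2 ≠ 0 := by positivity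
    have h4 : 1 - y / ((n:ℝ) + 1) ^ 2 = (((n:ℝ) + 1) ^ 2 - y) / ((n:ℝ) + 1) ^ 2 := by
      field_simp
    rw [h4]
    field_simp
  · intro n y hy
    have hy : y < r := hy
    have h1 := one_le_sq n
    have h2 : (1 - r) * ((n:ℝ) + 1) ^ 2 ≤ ((n:ℝ) + 1) ^ 2 - y := by nlinarith
    have h3 : 0 < (1 - r) * ((n:ℝ) + 1) ^ 2 := mul_pos (by linarith [hr.2]) (by linarith)
    rw [norm_neg, norm_div, Real.norm_eq_abs, Real.norm_of_nonneg (by linarith)]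
    calc |a n| / (((n:ℝ) + 1) ^ 2 - y) ≤ C / ((1 - r) * ((n:ℝ) + 1) ^ 2) :=
          div_le_div₀ hC (ha n) h3 h2
      _ = _ := by rw [div_mul_div_comm, mul_one]

/-- Differences of cosines. -/
noncomputable def cosD (b b' : ℝ) (n : ℕ) : ℝ :=
  Real.cos (2 * ((n:ℝ) + 1) * b) - Real.cos (2 * ((n:ℝ) + 1) * b')

lemma cosD_bound (b b' : ℝ) (n : ℕ) : |cosD b b' n| ≤ 2 := by
  unfold cosD
  have h1 := Real.neg_one_le_cos (2 * ((n:ℝ) + 1) * b)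
  have h2 := Real.cos_le_one (2 * ((n:ℝ) + 1) * b)
  have h3 := Real.neg_one_le_cos (2 * ((n:ℝ) + 1) * b')
  have h4 := Real.cos_le_one (2 * ((n:ℝ) + 1) * b')
  rw [abs_le]
  constructor <;> linarith

lemma cosD_sum_cosh (b b' k : ℝ) (hk : 0 < k) (hb : b ∈ Set.Ico 0 π) (hb' : b' ∈ Set.Ico 0 π) :
    ∑' n : ℕ, cosD b b' n / (((n:ℝ) + 1) ^ 2 - (-k ^ 2))
      = π * (Real.cosh (k * (π - 2 * b)) - Real.cosh (k * (π - 2 * b'))) /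
        (2 * k * Real.sinh (k * π)) := by
  have hkp : 0 < k * π := by positivity
  have h := cos_diff_hasSum (k : ℂ) (by
      intro n h
      have := congrArg Complex.re h
      simp at this
      exact hk.ne' this) (by
      rw [← Complex.ofReal_mul, ← Complex.ofReal_sinh]
      exact_mod_cast (Real.sinh_pos_iff.mpr hkp).ne') b b' hb hb'
  apply HasSum.tsum_eq
  rw [← Complex.hasSum_ofReal]
  convert! h using 1
  · funext n
    unfold cosD
    push_cast
    congr 1
    ring
  · push_cast
    ring

lemma cosD_sum_cos (b b' k : ℝ) (hk : 0 < k) (hk1 : k < 1) (hb : b ∈ Set.Ico 0 π)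
    (hb' : b' ∈ Set.Ico 0 π) :
    ∑' n : ℕ, cosD b b' n / (((n:ℝ) + 1) ^ 2 - k ^ 2)
      = -(π * (Real.cos (k * (π - 2 * b)) - Real.cos (k * (π - 2 * b'))) /
        (2 * k * Real.sin (k * π))) := by
  have hsin : 0 < Real.sin (k * π) := by
    apply Real.sin_pos_of_pos_of_lt_pi
    · positivity
    · nlinarith [Real.pi_pos]
  have hsc : Complex.sin (k * π) ≠ 0 := by
    rw [← Complex.ofReal_mul, ← Complex.ofReal_sin]
    exact_mod_cast hsin.ne'
  have e0 : ∀ t : ℂ, Complex.cosh (k * Complex.I * t) = Complex.cos (k * t) := by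
    intro t
    rw [← Complex.cosh_mul_I]; congr 1; ring
  have e1 : Complex.sinh (k * Complex.I * π) = Complex.sin (k * π) * Complex.I := by
    rw [← Complex.sinh_mul_I]; congr 1; ring
  have h := cos_diff_hasSum (k * Complex.I) (by
      intro n h
      have := congrArg Complex.im h
      simp at this
      have h1 : (n:ℝ) = -k := by linarith
      have h2 : (n:ℝ) < 0 := by linarith
      have h3 : (-1:ℝ) < n := by linarith
      have h4 : n < 0 := by exact_mod_cast h2
      have h5 : -1 < n := by exact_mod_cast h3
      omega) (by
      rw [e1]
      exact mul_ne_zero hsc Complex.I_ne_zero) b b' hb hb'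
  apply HasSum.tsum_eq
  rw [← Complex.hasSum_ofReal]
  rw [e0, e0, e1] at h
  convert! h using 1
  · funext n
    unfold cosD
    push_cast
    congr 1
    rw [mul_pow, Complex.I_sq]
    ring
  · push_cast
    have hkc : (k : ℂ) ≠ 0 := by exact_mod_cast hk.ne'
    have : 2 * (k * Complex.I) * (Complex.sin (k * π) * Complex.I)
        = -(2 * k * Complex.sin (k * π)) := by
      linear_combination (2 * k * Complex.sin (k * π)) * Complex.I_sq
    rw [this, div_neg]

lemma logSer_zero (a : ℕ → ℝ) : logSer a 0 = 0 := by
  simp [logSer]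

lemma logSer_nonneg {b b' : ℝ} (hb'0 : 0 < b') (hb'b : b' < b) (hb : b ≤ π / 2)
    {z : ℝ} (hz0 : 0 ≤ z) (hz : z < 1) : 0 ≤ logSer (cosD b b') z := by
  have hm : MonotoneOn (logSer (cosD b b')) (Set.Ico 0 1) := by
    have hd : ∀ y : ℝ, y < 1 → HasDerivAt (logSer (cosD b b')) _ y :=
      fun y hy => logSer_hasDerivAt (cosD b b') 2 (cosD_bound b b') hy
    refine monotoneOn_of_deriv_nonneg (convex_Ico 0 1)
      (fun y hy => (hd y hy.2).continuousAt.continuousWithinAt)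
      (fun y hy => ?_) ?_
    · rw [interior_Ico] at hy
      exact (hd y hy.2).differentiableAt.differentiableWithinAt
    · intro y hy
      rw [interior_Ico] at hy
      rw [(hd y hy.2).deriv]
      have hs : y = Real.sqrt y ^ 2 := (Real.sq_sqrt hy.1.le).symm
      set k := Real.sqrt y with hk
      have hk0 : 0 < k := Real.sqrt_pos.mpr hy.1
      have hk1 : k < 1 := by
        rw [hk, Real.sqrt_lt' one_pos]; simpa using hy.2
      have hpi := Real.pi_pos
      rw [hs, cosD_sum_cos b b' k hk0 hk1 ⟨by linarith, by linarith⟩ ⟨by linarith, by linarith⟩,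
        neg_neg]
      have hsin : 0 < Real.sin (k * π) := by
        apply Real.sin_pos_of_pos_of_lt_pi
        · positivity
        · nlinarith [Real.pi_pos]
      have hcos : Real.cos (k * (π - 2 * b')) ≤ Real.cos (k * (π - 2 * b)) := by
        apply Real.cos_le_cos_of_nonneg_of_le_pi
        · exact mul_nonneg hk0.le (by linarith)
        · nlinarith
        · nlinarith
      have : 0 ≤ Real.cos (k * (π - 2 * b)) - Real.cos (k * (π - 2 * b')) := by linarith
      positivity
  have := hm ⟨le_rfl, one_pos⟩ ⟨hz0, hz⟩ hz0
  rwa [logSer_zero] at this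

lemma imF_hasDerivAt {t : ℝ} (ht : 0 < t) (L : ℝ) :
    HasDerivAt (fun L => imF L t) (-Real.exp (-(L * t))) L := by
  unfold imF
  have h := ((((hasDerivAt_id L).mul_const t).neg).exp).div_const t
  convert! h using 1
  simp
  field_simp

/-- Derivative of `imC`. -/
noncomputable def imC' (x y : ℝ) (m : ℕ) (L : ℝ) : ℝ :=
  -(Real.exp (-(L * (y + m))) + Real.exp (-(L * (1 - y + m))) - Real.exp (-(L * (x + m)))
    - Real.exp (-(L * (1 - x + m)))) / 2

lemma imC_hasDerivAt {x y : ℝ} (hy : 0 < y) (hyx : y < x) (hx : x ≤ 1 / 2) (m : ℕ) (L : ℝ) :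
    HasDerivAt (imC x y m) (imC' x y m L) L := by
  have hm : (0:ℝ) ≤ m := m.cast_nonneg
  have h := ((((imF_hasDerivAt (t := y + m) (by linarith) L).add
    (imF_hasDerivAt (t := 1 - y + m) (by linarith) L)).sub
    (imF_hasDerivAt (t := x + m) (by linarith) L)).sub
    (imF_hasDerivAt (t := 1 - x + m) (by linarith) L)).div_const 2
  convert! h using 1
  unfold imC'
  ring

lemma imC_le {x y : ℝ} (hy : 0 < y) (hyx : y < x) (hx : x ≤ 1 / 2) (m : ℕ) {L : ℝ}
    (hL : 0 ≤ L) : imC x y m L ≤ imC x y m 0 := by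
  have hm : AntitoneOn (imC x y m) (Set.Ici 0) := by
    refine antitoneOn_of_deriv_nonpos (convex_Ici 0)
      (fun L _ => (imC_hasDerivAt hy hyx hx m L).continuousAt.continuousWithinAt)
      (fun L _ => (imC_hasDerivAt hy hyx hx m L).differentiableAt.differentiableWithinAt) ?_
    intro L hL
    rw [interior_Ici] at hL
    rw [(imC_hasDerivAt hy hyx hx m L).deriv]
    have h := exp_four (A := y + m) (B := x + m) (C := 1 - x + m) (D := 1 - y + m) (L := L)
      (by linarith) (by linarith) (by ring) (le_of_lt hL)
    unfold imC'
    linarith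
  exact hm (Set.mem_Ici.mpr le_rfl) hL hL

/-- The image sum. -/
noncomputable def imE (x y L : ℝ) : ℝ := ∑' m : ℕ, imC x y m L

lemma imE_continuousOn {x y : ℝ} (hy : 0 < y) (hyx : y < x) (hx : x ≤ 1 / 2) :
    ContinuousOn (imE x y) (Set.Ici 0) := by
  refine continuousOn_tsum (u := fun m => imC x y m 0)
    (fun m L _ => (imC_hasDerivAt hy hyx hx m L).continuousAt.continuousWithinAt)
    (imC_zero_hasSum hy hyx hx).summable ?_
  intro m L hL
  rw [Real.norm_of_nonneg (imC_pos hy hyx hx m hL).le]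
  exact imC_le hy hyx hx m hL

lemma imE_summable {x y : ℝ} (hy : 0 < y) (hyx : y < x) (hx : x ≤ 1 / 2) {L : ℝ} (hL : 0 ≤ L) :
    Summable (fun m => imC x y m L) :=
  Summable.of_nonneg_of_le (fun m => (imC_pos hy hyx hx m hL).le)
    (fun m => imC_le hy hyx hx m hL) (imC_zero_hasSum hy hyx hx).summable

lemma imE_pos {x y : ℝ} (hy : 0 < y) (hyx : y < x) (hx : x ≤ 1 / 2) {L : ℝ} (hL : 0 ≤ L) :
    0 < imE x y L :=
  (imE_summable hy hyx hx hL).tsum_pos (fun m => (imC_pos hy hyx hx m hL).le) 0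
    (imC_pos hy hyx hx 0 hL)

lemma imE_hasDerivAt {x y : ℝ} (hy : 0 < y) (hyx : y < x) (hx : x ≤ 1 / 2) {L : ℝ} (hL : 0 < L) :
    HasDerivAt (imE x y)
      ((Real.cosh (L * (1 / 2 - x)) - Real.cosh (L * (1 / 2 - y))) / (2 * Real.sinh (L / 2))) L := by
  have hgeo : ∀ l : ℝ, 0 < l → Summable (fun m : ℕ => Real.exp (-l) ^ m) := fun l hl =>
    summable_geometric_of_lt_one (Real.exp_pos _).le (by rw [Real.exp_lt_one_iff]; linarith)
  have hL2 : L / 2 < L := by linarith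
  have hder := hasDerivAt_tsum_of_isPreconnected (g := imC x y) (g' := imC' x y)
    (u := fun m : ℕ => 2 * Real.exp (-(L / 2)) ^ m) (t := Set.Ioi (L / 2)) (y₀ := L) (y := L)
    ((hgeo _ (by linarith)).mul_left 2) isOpen_Ioi isPreconnected_Ioi
    (fun m l _ => imC_hasDerivAt hy hyx hx m l) ?_ hL2 (imE_summable hy hyx hx hL.le) hL2
  · convert! hder using 1
    have hterm : ∀ m : ℕ, imC' x y m L = (-(Real.exp (-(L * y)) + Real.exp (-(L * (1 - y)))
        - Real.exp (-(L * x)) - Real.exp (-(L * (1 - x)))) / 2) * Real.exp (-L) ^ m := by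
      intro m
      have e : ∀ s : ℝ, Real.exp (-(L * (s + m))) = Real.exp (-(L * s)) * Real.exp (-L) ^ m := by
        intro s
        rw [← Real.exp_nat_mul, ← Real.exp_add]
        congr 1; ring
      unfold imC'
      rw [e, e, e, e]
      ring
    simp_rw [hterm]
    rw [tsum_mul_left, tsum_geometric_of_lt_one (Real.exp_pos _).le
      (by rw [Real.exp_lt_one_iff]; linarith)]
    have hc : ∀ s : ℝ, Real.exp (-(L * s)) + Real.exp (-(L * (1 - s)))
        = 2 * Real.exp (-(L / 2)) * Real.cosh (L * (1 / 2 - s)) := by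
      intro s
      have e1 : Real.exp (-(L * s)) = Real.exp (-(L / 2)) * Real.exp (L * (1 / 2 - s)) := by
        rw [← Real.exp_add]; congr 1; ring
      have e2 : Real.exp (-(L * (1 - s))) = Real.exp (-(L / 2)) * Real.exp (-(L * (1 / 2 - s))) := by
        rw [← Real.exp_add]; congr 1; ring
      rw [e1, e2, Real.cosh_eq]; ring
    have hsn : 1 - Real.exp (-L) = 2 * Real.exp (-(L / 2)) * Real.sinh (L / 2) := by
      have e1 : Real.exp (-L) = Real.exp (-(L / 2)) * Real.exp (-(L / 2)) := by
        rw [← Real.exp_add]; congr 1; ring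
      have e2 : Real.exp (-(L / 2)) * Real.exp (L / 2) = 1 := by
        rw [← Real.exp_add]; simp
      rw [Real.sinh_eq, e1]
      linear_combination -e2
    have hs0 : Real.sinh (L / 2) ≠ 0 := (Real.sinh_pos_iff.mpr (by linarith)).ne'
    have he0 : Real.exp (-(L / 2)) ≠ 0 := (Real.exp_pos _).ne'
    rw [hsn]
    have e5 : -(Real.exp (-(L * y)) + Real.exp (-(L * (1 - y)))
        - Real.exp (-(L * x)) - Real.exp (-(L * (1 - x))))
        = 2 * Real.exp (-(L / 2)) * (Real.cosh (L * (1 / 2 - x)) - Real.cosh (L * (1 / 2 - y))) := by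
      linear_combination hc x - hc y
    rw [e5]
    field_simp
  · intro m l hl
    have hl : L / 2 < l := hl
    have hm : (0:ℝ) ≤ m := m.cast_nonneg
    have e : ∀ s : ℝ, 0 ≤ s → Real.exp (-(l * (s + m))) ≤ Real.exp (-(L / 2)) ^ m := by
      intro s hs
      rw [← Real.exp_nat_mul]
      apply Real.exp_le_exp.mpr
      nlinarith [mul_nonneg (by linarith : 0 ≤ l) hs, mul_nonneg hm (by linarith : 0 ≤ l - L / 2)]
    have k1 := e y hy.le
    have k2 := e (1 - y) (by linarith)
    have k3 := e x (by linarith)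
    have k4 := e (1 - x) (by linarith)
    have p1 := Real.exp_pos (-(l * (y + m)))
    have p2 := Real.exp_pos (-(l * (1 - y + m)))
    have p3 := Real.exp_pos (-(l * (x + m)))
    have p4 := Real.exp_pos (-(l * (1 - x + m)))
    unfold imC'
    rw [Real.norm_eq_abs, abs_le]
    constructor <;> linarith

lemma main_neg {x y : ℝ} (hy : 0 < y) (hyx : y < x) (hx : x ≤ 1 / 2) {L : ℝ} (hL : 0 ≤ L) :
    imE x y L ≤ logSer (cosD (π * x) (π * y)) (-(L / (2 * π)) ^ 2) + (psiS x - psiS y) := by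
  have hpi := Real.pi_pos
  have hdl : ∀ l : ℝ, HasDerivAt (fun l : ℝ => logSer (cosD (π * x) (π * y)) (-(l / (2 * π)) ^ 2))
      ((-∑' n : ℕ, cosD (π * x) (π * y) n / (((n:ℝ) + 1) ^ 2 - (-(l / (2 * π)) ^ 2))) *
        (-(2 * (l / (2 * π)) * (1 / (2 * π))))) l := by
    intro l
    have h1 := logSer_hasDerivAt (cosD (π * x) (π * y)) 2 (cosD_bound _ _)
      (z := -(l / (2 * π)) ^ 2) (by nlinarith [sq_nonneg (l / (2 * π))])
    have h2 : HasDerivAt (fun l : ℝ => -(l / (2 * π)) ^ 2) (-(2 * (l / (2 * π)) * (1 / (2 * π)))) l := by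
      have := (((hasDerivAt_id l).div_const (2 * π)).pow 2).neg
      simpa using! this
    exact h1.comp l h2
  have hH : MonotoneOn (fun l : ℝ => logSer (cosD (π * x) (π * y)) (-(l / (2 * π)) ^ 2)
      - imE x y l) (Set.Ici 0) := by
    refine monotoneOn_of_deriv_nonneg (convex_Ici 0) ?_ ?_ ?_
    · exact ContinuousOn.sub (fun l _ => (hdl l).continuousAt.continuousWithinAt)
        (imE_continuousOn hy hyx hx)
    · intro l hl
      rw [interior_Ici] at hl
      exact ((hdl l).sub (imE_hasDerivAt hy hyx hx hl)).differentiableAt.differentiableWithinAt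
    · intro l hl
      rw [interior_Ici] at hl
      have hl : 0 < l := hl
      refine le_of_eq ?_
      have hd := ((hdl l).sub (imE_hasDerivAt hy hyx hx hl)).deriv
      refine Eq.trans ?_ hd.symm
      rw [cosD_sum_cosh (π * x) (π * y) (l / (2 * π)) (by positivity)
        ⟨by nlinarith, by nlinarith⟩ ⟨by positivity, by nlinarith⟩]
      have e1 : ∀ s : ℝ, l / (2 * π) * (π - 2 * (π * s)) = l * (1 / 2 - s) := by
        intro s; field_simp
      have e2 : l / (2 * π) * π = l / 2 := by field_simp
      rw [e1, e1, e2]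
      have hs0 : Real.sinh (l / 2) ≠ 0 := (Real.sinh_pos_iff.mpr (by linarith)).ne'
      field_simp
      ring
  have h := hH (Set.mem_Ici.mpr le_rfl) hL hL
  have h0 : imE x y 0 = psiS x - psiS y := (imC_zero_hasSum hy hyx hx).tsum_eq
  simp only [zero_div] at h
  have e : (-(0:ℝ) ^ 2) = 0 := by norm_num
  rw [e, logSer_zero, h0] at h
  linarith

lemma main_pos {x y : ℝ} (hy : 0 < y) (hyx : y < x) (hx : x ≤ 1 / 2) {z : ℝ} (hz : z < 1) :
    0 < logSer (cosD (π * x) (π * y)) z + (psiS x - psiS y) := by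
  have hpi := Real.pi_pos
  rcases le_or_gt 0 z with h | h
  · have h1 := logSer_nonneg (b := π * x) (b' := π * y) (by positivity) (by nlinarith)
      (by nlinarith) h hz
    have h0 : imE x y 0 = psiS x - psiS y := (imC_zero_hasSum hy hyx hx).tsum_eq
    have := imE_pos hy hyx hx (le_refl (0:ℝ))
    linarith
  · have hL : 0 ≤ 2 * π * Real.sqrt (-z) := by positivity
    have h1 := main_neg hy hyx hx hL
    have e : -(2 * π * Real.sqrt (-z) / (2 * π)) ^ 2 = z := by
      rw [mul_div_cancel_left₀ _ (by positivity), Real.sq_sqrt (by linarith)]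
      ring
    rw [e] at h1
    linarith [imE_pos hy hyx hx hL]

lemma xi_formula (x z : ℝ) (hx : 0 < x) (hx1 : x < 1) (hz : z < 1) :
    xiLayer (π * x) z = (1 / (4 * π ^ 2)) * (-(∑' n : ℕ, Real.log (1 - z / ((n:ℝ) + 1) ^ 2))
      + logSer (fun n => Real.cos (2 * ((n:ℝ) + 1) * (π * x))) z
      + Real.eulerMascheroniConstant + psiS x) := by
  have hpi := Real.pi_pos
  have hterm : ∀ n : ℕ, Real.log (Real.sqrt (1 - z / ((n : ℝ) + 1) ^ 2)) *
      Real.sin (((n : ℝ) + 1) * (π * x)) ^ 2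
      = (1 / 4) * (Real.log (1 - z / ((n:ℝ) + 1) ^ 2) * 1 - Real.log (1 - z / ((n:ℝ) + 1) ^ 2) *
        Real.cos (2 * ((n:ℝ) + 1) * (π * x))) := by
    intro n
    rw [Real.log_sqrt (arg_pos hz n).le, Real.sin_sq_eq_half_sub, mul_assoc 2]
    ring
  have hs1 := summable_log_mul z (fun _ => 1) 1 (by simp)
  have hs2 := summable_log_mul z (fun n => Real.cos (2 * ((n:ℝ) + 1) * (π * x))) 1
    (fun n => Real.abs_cos_le_one _)
  unfold xiLayer
  simp_rw [hterm]
  rw [tsum_mul_left, hs1.tsum_sub hs2, mul_div_cancel_left₀ _ hpi.ne']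
  have hr := digamma_reflect hx hx1
  unfold logSer psiS
  simp only [mul_one]
  linear_combination (-(1 / (8 * π ^ 2))) * hr

lemma xi_lt {x y : ℝ} (hy : 0 < y) (hyx : y < x) (hx : x ≤ 1 / 2) {z : ℝ} (hz : z < 1) :
    xiLayer (π * y) z < xiLayer (π * x) z := by
  have hpi := Real.pi_pos
  rw [xi_formula x z (by linarith) (by linarith) hz, xi_formula y z hy (by linarith) hz]
  have h := main_pos hy hyx hx hz
  have hs1 := summable_log_mul z (fun n => Real.cos (2 * ((n:ℝ) + 1) * (π * x))) 1
    (fun n => Real.abs_cos_le_one _)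
  have hs2 := summable_log_mul z (fun n => Real.cos (2 * ((n:ℝ) + 1) * (π * y))) 1
    (fun n => Real.abs_cos_le_one _)
  have e : logSer (cosD (π * x) (π * y)) z
      = logSer (fun n => Real.cos (2 * ((n:ℝ) + 1) * (π * x))) z
        - logSer (fun n => Real.cos (2 * ((n:ℝ) + 1) * (π * y))) z := by
    unfold logSer cosD
    rw [← hs1.tsum_sub hs2]
    congr 1
    funext n
    ring
  rw [e] at h
  apply mul_lt_mul_of_pos_left _ (by positivity)
  linarith

lemma xi_mono (b : ℝ) {z z' : ℝ} (hz : z < 1) (hzz : z' ≤ z) : xiLayer b z' ≤ xiLayer b z := by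
  have hS : ∀ t : ℝ, t < 1 → Summable (fun n : ℕ =>
      Real.log (Real.sqrt (1 - t / ((n : ℝ) + 1) ^ 2)) * Real.sin (((n : ℝ) + 1) * b) ^ 2) := by
    intro t ht
    have h := summable_log_mul t (fun n : ℕ => Real.sin (((n : ℝ) + 1) * b) ^ 2 / 2) 1 (by
      intro n
      have := Real.sin_sq_le_one (((n : ℝ) + 1) * b)
      rw [abs_of_nonneg (by positivity)]
      linarith)
    refine h.congr ?_
    intro n
    rw [Real.log_sqrt (arg_pos ht n).le]
    ring
  have hle := (hS z hz).tsum_le_tsum (g := fun n : ℕ =>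
      Real.log (Real.sqrt (1 - z' / ((n : ℝ) + 1) ^ 2)) * Real.sin (((n : ℝ) + 1) * b) ^ 2) (by
      intro n
      apply mul_le_mul_of_nonneg_right _ (sq_nonneg _)
      apply Real.log_le_log (Real.sqrt_pos.mpr (arg_pos hz n))
      apply Real.sqrt_le_sqrt
      have h1 := one_le_sq n
      have : z' / ((n : ℝ) + 1) ^ 2 ≤ z / ((n : ℝ) + 1) ^ 2 :=
        div_le_div_of_nonneg_right hzz (by linarith)
      linarith) (hS z' (by linarith))
  unfold xiLayer
  have hc : 0 ≤ 1 / π ^ 2 := by positivity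
  have := mul_le_mul_of_nonneg_left hle hc
  linarith

end CalculusPart

/-- Strict monotonicity of the bound-state energy across the halflayer: for
`0 < b' < b ≤ π/2` and `α ∈ ℝ`, if `z` and `z'` are the bound-state energies,
i.e. `z, z' < 1` with `ξ(b,z) = α` and `ξ(b',z') = α`, then `z < z'`. -/
theorem eigenvalue_monotone_halflayer (b b' α z z' : ℝ) (hb'0 : 0 < b') (hb'b : b' < b)
    (hb : b ≤ π / 2) (hz : z < 1) (hz' : z' < 1)
    (heq : xiLayer b z = α) (heq' : xiLayer b' z' = α) :
    z < z' := by
  by_contra hcon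
  push Not at hcon
  have hpi := Real.pi_pos
  have e1 : π * (b / π) = b := by field_simp
  have e2 : π * (b' / π) = b' := by field_simp
  have h1 := xi_lt (x := b / π) (y := b' / π) (by positivity)
    (div_lt_div_of_pos_right hb'b hpi) (by rw [div_le_iff₀ hpi]; linarith) hz'
  rw [e1, e2] at h1
  have h2 := xi_mono b hz hcon
  linarith
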